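/- arXiv:1801.00316 — 4 statements merged into one kernel-verified Lean document; each statement's English description precedes it below -/
import Mathlib

section
/- Let m be a positive integer, let p ∈ [0,1] be a real number, and let S be a subset of {1,…,m}. Then ∑_{N ⊆ {1,…,m}} p^{|N|} · (1-p)^{m-|N|} · g(N) = (1 - (1-p)^m) · |S| / m, where g(N) = |N ∩ S| / |N| if N is nonempty and g(N) = 0 if N is empty. -/
/-!
Only the fact that the weight of `N` depends on `#N` alone matters. Transposing two elements of `U`
preserves such weights, so the total weight of the sets containing `i` is the same for all `i ∈ U`.
Summing over `i ∈ S`, the weighted sum of `#(N ∩ S)` is the fraction `#S / #U` of the weighted sum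
of `#N`. Weights divided by `#N` turn the latter into the total weight of the nonempty sets.
-/

open Finset

section Symmetry

variable {α M : Type*} [DecidableEq α] [AddCommMonoid M]

lemma sum_powerset_filter_mem_card_eq {U : Finset α} {i j : α} (hi : i ∈ U) (hj : j ∈ U)
    (f : ℕ → M) :
    ∑ N ∈ U.powerset with i ∈ N, f #N = ∑ N ∈ U.powerset with j ∈ N, f #N := by
  have map_swap : U.map (Equiv.swap i j).toEmbedding = U :=
    map_perm fun x hx ↦ by
      rcases (Equiv.swap_apply_ne_self_iff.mp hx).2 with rfl | rfl <;> assumption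
  refine sum_equiv (Equiv.swap i j).finsetCongr (fun N ↦ ?_) (by simp)
  have subset_iff : N.map (Equiv.swap i j).toEmbedding ⊆ U ↔ N ⊆ U := by
    conv_lhs => rw [← map_swap, map_subset_map]
  simp [subset_iff]

lemma sum_card_inter_nsmul (A : Finset (Finset α)) (S : Finset α) (f : Finset α → M) :
    ∑ N ∈ A, #(N ∩ S) • f N = ∑ i ∈ S, ∑ N ∈ A with i ∈ N, f N := by
  simp only [sum_filter]
  rw [sum_comm]
  refine sum_congr rfl fun N _ ↦ ?_
  rw [← sum_filter, sum_const, filter_mem_eq_inter, inter_comm]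

lemma card_nsmul_sum_powerset_card_inter {S U : Finset α} (hS : S ⊆ U) (f : ℕ → M) :
    #U • ∑ N ∈ U.powerset, #(N ∩ S) • f #N = #S • ∑ N ∈ U.powerset, #N • f #N := by
  let d (i : α) : M := ∑ N ∈ U.powerset with i ∈ N, f #N
  calc #U • ∑ N ∈ U.powerset, #(N ∩ S) • f #N
      = ∑ _i ∈ U, ∑ j ∈ S, d j := by rw [sum_const, sum_card_inter_nsmul]
    _ = ∑ i ∈ U, ∑ _j ∈ S, d i :=
        sum_congr rfl fun _ hi ↦ sum_congr rfl fun _ hj ↦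
          sum_powerset_filter_mem_card_eq (hS hj) hi f
    _ = #S • ∑ N ∈ U.powerset, #(N ∩ U) • f #N := by
        simp only [sum_const, sum_card_inter_nsmul, sum_nsmul, d]
    _ = #S • ∑ N ∈ U.powerset, #N • f #N := by
        congr 1
        exact sum_congr rfl fun N hN ↦ by rw [inter_eq_left.mpr (mem_powerset.mp hN)]

end Symmetry

lemma sum_powerset_mul_card_inter_div_card {α K : Type*} [DecidableEq α] [Field K] [CharZero K]
    {S U : Finset α} (hU : U.Nonempty) (hS : S ⊆ U) (w : ℕ → K) :
    ∑ N ∈ U.powerset, w #N * (if N.Nonempty then (#(N ∩ S) : K) / #N else 0)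
      = (∑ N ∈ U.powerset with N.Nonempty, w #N) * #S / #U := by
  have hU' : (#U : K) ≠ 0 := Nat.cast_ne_zero.mpr hU.card_ne_zero
  have weight_inter (N : Finset α) :
      w #N * (if N.Nonempty then (#(N ∩ S) : K) / #N else 0) = #(N ∩ S) • (w #N / #N) := by
    rcases N.eq_empty_or_nonempty with rfl | hN
    · simp
    · rw [if_pos hN, nsmul_eq_mul, mul_div_left_comm]
  have weight_self (N : Finset α) : #N • (w #N / #N) = if N.Nonempty then w #N else 0 := by
    rcases N.eq_empty_or_nonempty with rfl | hN
    · simp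
    · rw [if_pos hN, nsmul_eq_mul, mul_div_cancel₀ _ (Nat.cast_ne_zero.mpr hN.card_ne_zero)]
  have average := card_nsmul_sum_powerset_card_inter hS fun k ↦ w k / k
  simp only [← weight_inter, weight_self, ← sum_filter, nsmul_eq_mul] at average
  rw [eq_div_iff hU', mul_comm, average, mul_comm]

lemma sum_powerset_nonempty_pow_mul_one_sub_pow {α R : Type*} [CommRing R]
    (U : Finset α) (p : R) :
    ∑ N ∈ U.powerset with N.Nonempty, p ^ #N * (1 - p) ^ (#U - #N) = 1 - (1 - p) ^ #U := by
  classical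
  have total : ∑ N ∈ U.powerset, p ^ #N * (1 - p) ^ (#U - #N) = 1 := by
    rw [sum_pow_mul_eq_add_pow, add_sub_cancel, one_pow]
  have filter_nonempty : {N ∈ U.powerset | N.Nonempty} = U.powerset.erase ∅ := by
    ext N
    simp [nonempty_iff_ne_empty, and_comm]
  rw [filter_nonempty, sum_erase_eq_sub (empty_mem_powerset U), total]
  simp

theorem random_subset_pull_probability_general {α K : Type*} [DecidableEq α] [Field K] [CharZero K]
    {S U : Finset α} (hU : U.Nonempty) (hS : S ⊆ U) (p : K) :
    ∑ N ∈ U.powerset, p ^ #N * (1 - p) ^ (#U - #N) *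
        (if N.Nonempty then (#(N ∩ S) : K) / #N else 0)
      = (1 - (1 - p) ^ #U) * #S / #U := by
  rw [sum_powerset_mul_card_inter_div_card hU hS fun k ↦ p ^ k * (1 - p) ^ (#U - k),
    sum_powerset_nonempty_pow_mul_one_sub_pow]

/-- Probability that a random neighborhood is nonempty and a uniformly random neighbor lies in
the informed set S: exact pull probability identity. -/
theorem random_subset_pull_probability (m : ℕ) (hm : 0 < m) (p : ℝ)
    (hp0 : 0 ≤ p) (hp1 : p ≤ 1) (S : Finset ℕ) (hS : S ⊆ Finset.Icc 1 m) :
    ∑ N ∈ (Finset.Icc 1 m).powerset,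
        p ^ N.card * (1 - p) ^ (m - N.card) *
          (if N.Nonempty then ((N ∩ S).card : ℝ) / N.card else 0)
      = (1 - (1 - p) ^ m) * S.card / m := by
  simpa only [Nat.card_Icc, Nat.add_sub_cancel] using
    random_subset_pull_probability_general (Finset.nonempty_Icc.mpr hm) hS p
end

section
/- Let n be a positive integer, let a be a real number with 0 < a < n, and let j, k be integers with 1 ≤ j ≤ k ≤ n. Then C(k, j) · (a/n)^j · (1 - a/n)^{k-j} ≤ k · (a/n) · (1 - a/n)^{k-1} · (1/j!) · (a·k/(n - a))^{j-1}. -/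
/-!
Writing `p = a / n`, the binomial coefficient is at most `k ^ j / j!`. Going from one informed
neighbor to `j` of them replaces `j - 1` factors `1 - p` by factors `p`, so that beyond the first
neighbor each costs a factor of `k` times the odds `p / (1 - p) = a / (n - a)`.
-/

lemma div_div_one_sub_div {𝕜 : Type*} [DivisionRing 𝕜] (a : 𝕜) {n : 𝕜} (hn : n ≠ 0) :
    a / n / (1 - a / n) = a / (n - a) := by
  rw [one_sub_div hn, div_div_div_cancel_right₀ hn]

lemma mul_pow_sub_one_mul_div_pow_sub_one {G₀ : Type*} [CommGroupWithZero G₀] (x : G₀) {q : G₀}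
    (hq : q ≠ 0) {j k : ℕ} (hj : 1 ≤ j) (hjk : j ≤ k) :
    x * q ^ (k - 1) * (x / q) ^ (j - 1) = x ^ j * q ^ (k - j) := by
  have q_pow : q ^ (k - 1) = q ^ (k - j) * q ^ (j - 1) := by
    rw [← pow_add, Nat.sub_add_sub_cancel hjk hj]
  calc x * q ^ (k - 1) * (x / q) ^ (j - 1)
      = x * x ^ (j - 1) * q ^ (k - j) := by
        rw [q_pow, div_pow]
        field_simp
    _ = x ^ j * q ^ (k - j) := by rw [mul_pow_sub_one (Nat.one_le_iff_ne_zero.mp hj)]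

section LinearOrderedField

variable {𝕜 : Type*} [Field 𝕜] [LinearOrder 𝕜] [IsStrictOrderedRing 𝕜]

lemma choose_mul_pow_mul_pow_sub_le {p q : 𝕜} (hp : 0 ≤ p) (hq : 0 < q) {j k : ℕ}
    (hj : 1 ≤ j) (hjk : j ≤ k) :
    (Nat.choose k j : 𝕜) * p ^ j * q ^ (k - j)
      ≤ k * p * q ^ (k - 1) * (1 / (Nat.factorial j)) * (k * p / q) ^ (j - 1) :=
  calc (Nat.choose k j : 𝕜) * p ^ j * q ^ (k - j)
      ≤ (k : 𝕜) ^ j / Nat.factorial j * p ^ j * q ^ (k - j) := by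
        gcongr
        exact Nat.choose_le_pow_div j k
    _ = 1 / Nat.factorial j * ((k * p) ^ j * q ^ (k - j)) := by ring
    _ = 1 / Nat.factorial j * (k * p * q ^ (k - 1) * (k * p / q) ^ (j - 1)) := by
        rw [mul_pow_sub_one_mul_div_pow_sub_one (k * p) hq.ne' hj hjk]
    _ = k * p * q ^ (k - 1) * (1 / Nat.factorial j) * (k * p / q) ^ (j - 1) := by ring

theorem exactly_j_neighbors_bound_general {n a : 𝕜} (ha : 0 ≤ a) (han : a < n) {j k : ℕ}
    (hj : 1 ≤ j) (hjk : j ≤ k) :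
    (Nat.choose k j : 𝕜) * (a / n) ^ j * (1 - a / n) ^ (k - j)
      ≤ k * (a / n) * (1 - a / n) ^ (k - 1) * (1 / (Nat.factorial j)) *
          (a * k / (n - a)) ^ (j - 1) := by
  have hn : 0 < n := ha.trans_lt han
  have hp : 0 ≤ a / n := div_nonneg ha hn.le
  have hq : 0 < 1 - a / n := sub_pos.mpr ((div_lt_one hn).mpr han)
  have odds : a * k / (n - a) = k * (a / n) / (1 - a / n) := by
    rw [mul_comm a, mul_div_assoc, mul_div_assoc, div_div_one_sub_div a hn.ne']
  rw [odds]
  exact choose_mul_pow_mul_pow_sub_le hp hq hj hjk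

end LinearOrderedField

/-- Quantitative bound on the probability of exactly j informed neighbors, relative to the
probability of exactly one informed neighbor (equation (5) in the proof of Lemma 6). -/
theorem exactly_j_neighbors_bound (n : ℕ) (hn : 0 < n) (a : ℝ) (ha : 0 < a) (han : a < n)
    (j k : ℕ) (hj : 1 ≤ j) (hjk : j ≤ k) (hkn : k ≤ n) :
    (Nat.choose k j : ℝ) * (a / n) ^ j * (1 - a / n) ^ (k - j)
      ≤ k * (a / n) * (1 - a / n) ^ (k - 1) * (1 / (Nat.factorial j)) *
          (a * k / (n - a)) ^ (j - 1) :=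
  exactly_j_neighbors_bound_general ha.le han hj hjk
end

section
/- Let (Ω, P) be a probability space and let A, B, E be events with P(E) < 1. Assume P(A ∩ B) · P(Eᶜ) ≤ P(A) · P(B ∩ Eᶜ). Then the covariance of the indicator random variables of A and B satisfies Cov(1_A, 1_B) = P(A ∩ B) - P(A)·P(B) ≤ P(A)·P(B)·P(E)/(1 - P(E)). -/
open MeasureTheory

theorem sub_le_mul_div_one_sub_iff {K : Type*} [Field K] [LinearOrder K] [IsStrictOrderedRing K]
    {x y e : K} (he : e < 1) : x - y ≤ y * e / (1 - e) ↔ x * (1 - e) ≤ y := by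
  have hpos : 0 < 1 - e := sub_pos.mpr he
  have hsum : y + y * e / (1 - e) = y / (1 - e) := by field
  rw [sub_le_iff_le_add', hsum, le_div_iff₀ hpos]

theorem measureReal_univ_le_add_compl {Ω : Type*} [MeasurableSpace Ω] (μ : Measure Ω) (s : Set Ω) :
    μ.real Set.univ ≤ μ.real s + μ.real sᶜ :=
  s.union_compl_self ▸ measureReal_union_le s sᶜ

theorem covariance_bound_of_conditional_general {Ω : Type*} [MeasurableSpace Ω]
    (P : Measure Ω) [IsProbabilityMeasure P] (A B E : Set Ω) (hE1 : P.real E < 1)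
    (hcond : P.real (A ∩ B) * P.real Eᶜ ≤ P.real A * P.real B) :
    P.real (A ∩ B) - P.real A * P.real B
      ≤ P.real A * P.real B * P.real E / (1 - P.real E) := by
  have hE : 1 - P.real E ≤ P.real Eᶜ := by
    rw [sub_le_iff_le_add', ← probReal_univ (μ := P)]
    exact measureReal_univ_le_add_compl P E
  rw [sub_le_mul_div_one_sub_iff hE1]
  calc P.real (A ∩ B) * (1 - P.real E)
      ≤ P.real (A ∩ B) * P.real Eᶜ := mul_le_mul_of_nonneg_left hE measureReal_nonneg
    _ ≤ P.real A * P.real B := hcond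

/-- Abstract covariance bound: if P[A∩B]·P[Eᶜ] ≤ P[A]·P[B∩Eᶜ] (i.e. P[B|A] ≤ P[B|Eᶜ]) and
P[E] < 1, then Cov(1_A, 1_B) = P[A∩B] - P[A]P[B] ≤ P[A]·P[B]·P[E]/(1-P[E]). -/
theorem covariance_bound_of_conditional {Ω : Type*} [MeasurableSpace Ω]
    (P : Measure Ω) [IsProbabilityMeasure P] (A B E : Set Ω)
    (hA : MeasurableSet A) (hB : MeasurableSet B) (hE : MeasurableSet E)
    (hE1 : (P E).toReal < 1)
    (hcond : (P (A ∩ B)).toReal * (P Eᶜ).toReal ≤ (P A).toReal * (P (B ∩ Eᶜ)).toReal) :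
    (P (A ∩ B)).toReal - (P A).toReal * (P B).toReal
      ≤ (P A).toReal * (P B).toReal * (P E).toReal / (1 - (P E).toReal) := by
  have hBE : P.real (B ∩ Eᶜ) ≤ P.real B := measureReal_mono Set.inter_subset_left
  exact covariance_bound_of_conditional_general P A B E hE1
    (hcond.trans (mul_le_mul_of_nonneg_left hBE measureReal_nonneg))
end

section
/- Let a > 0 be a real number. Then there exist a constant C > 0 and a natural number N such that for all integers n ≥ N and all integers k with 1 ≤ k ≤ n/2, setting μ := k/n, |(1 - (1 - a/n)^{n-k}) / (a·(1-μ)) - (1 - e^{-a})/a| ≤ C·μ. -/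
/-!
With `z = -a` and `t = 1 - μ = (n - k) / n`, the pull probability is
`((1 + z / n) ^ (n - k) - 1) / (t * z)`. Each of the `n - k` factors `1 + z / n` differs from
`exp (z / n)` by `O(1 / n ^ 2)`, so replacing the power by `exp (t * z)` costs `O(t / n)`, and the
denominator `t * z` brings this down to `O(1 / n) ≤ O(μ)` uniformly in `k < n`. The remaining
difference is that of the slope of `exp` over `[0, t * z]` and over `[0, z]`, which is `O(1 - t)`.
-/

theorem norm_pow_sub_pow_le {R : Type*} [SeminormedRing R] [NormOneClass R] {x y : R} {M : ℝ}
    (hx : ‖x‖ ≤ M) (hy : ‖y‖ ≤ M) (n : ℕ) :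
    ‖x ^ n - y ^ n‖ ≤ n * ‖x - y‖ * M ^ (n - 1) := by
  have hM : 0 ≤ M := (norm_nonneg x).trans hx
  induction n with
  | zero => simp
  | succ n ih =>
    have hyn : ‖y ^ n‖ ≤ M ^ n := (norm_pow_le y n).trans (by gcongr)
    calc ‖x ^ (n + 1) - y ^ (n + 1)‖
        = ‖x * (x ^ n - y ^ n) + (x - y) * y ^ n‖ := by
          congr 1; rw [pow_succ', pow_succ']; noncomm_ring
      _ ≤ ‖x‖ * ‖x ^ n - y ^ n‖ + ‖x - y‖ * ‖y ^ n‖ :=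
          (norm_add_le _ _).trans (add_le_add (norm_mul_le _ _) (norm_mul_le _ _))
      _ ≤ M * (n * ‖x - y‖ * M ^ (n - 1)) + ‖x - y‖ * M ^ n := by gcongr
      _ = (n + 1 : ℕ) * ‖x - y‖ * M ^ (n + 1 - 1) := by
          cases n with
          | zero => simp
          | succ n => simp only [Nat.add_sub_cancel]; push_cast; ring

theorem norm_one_add_sub_exp_le (z : ℂ) :
    ‖1 + z - Complex.exp z‖ ≤ ‖z‖ ^ 2 * Real.exp ‖z‖ := by
  simpa [Finset.sum_range_succ, norm_sub_rev] using
    Complex.norm_exp_sub_sum_le_norm_mul_exp z 2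

theorem norm_one_add_pow_sub_exp_le (z : ℂ) (m : ℕ) :
    ‖(1 + z) ^ m - Complex.exp (m * z)‖ ≤ m * ‖z‖ ^ 2 * Real.exp (m * ‖z‖) := by
  have one_add_le : ‖1 + z‖ ≤ Real.exp ‖z‖ :=
    calc ‖1 + z‖ ≤ ‖z‖ + 1 := by simpa [add_comm] using norm_add_le 1 z
      _ ≤ Real.exp ‖z‖ := Real.add_one_le_exp _
  have pow_sub_le := norm_pow_sub_pow_le one_add_le (Complex.norm_exp_le_exp_norm z) m
  obtain rfl | hm := eq_or_ne m 0
  · simp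
  calc ‖(1 + z) ^ m - Complex.exp (m * z)‖
      ≤ m * ‖1 + z - Complex.exp z‖ * Real.exp ‖z‖ ^ (m - 1) := by
        rwa [Complex.exp_nat_mul]
    _ ≤ m * (‖z‖ ^ 2 * Real.exp ‖z‖) * Real.exp ‖z‖ ^ (m - 1) := by
        gcongr; exact norm_one_add_sub_exp_le z
    _ = m * ‖z‖ ^ 2 * (Real.exp ‖z‖ ^ (m - 1) * Real.exp ‖z‖) := by ring
    _ = m * ‖z‖ ^ 2 * Real.exp (m * ‖z‖) := by
        rw [pow_sub_one_mul hm, Real.exp_nat_mul]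

theorem norm_one_add_div_pow_sub_exp_div_le {z : ℂ} (hz : z ≠ 0) {m n : ℕ} (hm : m ≠ 0)
    (hmn : m ≤ n) :
    ‖((1 + z / n) ^ m - Complex.exp (m / n * z)) / (m / n * z)‖ ≤ ‖z‖ * Real.exp ‖z‖ / n := by
  have hm' : (0 : ℝ) < m := by positivity
  have hn : (0 : ℝ) < n := hm'.trans_le (mod_cast hmn)
  have hz' : 0 < ‖z‖ := norm_pos_iff.mpr hz
  have frac_le_one : (m : ℝ) / n ≤ 1 := div_le_one_of_le₀ (mod_cast hmn) hn.le
  have numerator_le : ‖(1 + z / n) ^ m - Complex.exp (m / n * z)‖ ≤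
      m * (‖z‖ / n) ^ 2 * Real.exp (m / n * ‖z‖) := by
    simpa [mul_div_assoc', div_mul_eq_mul_div] using norm_one_add_pow_sub_exp_le (z / n) m
  calc ‖((1 + z / n) ^ m - Complex.exp (m / n * z)) / (m / n * z)‖
      = ‖(1 + z / n) ^ m - Complex.exp (m / n * z)‖ / (m / n * ‖z‖) := by simp
    _ ≤ m * (‖z‖ / n) ^ 2 * Real.exp (m / n * ‖z‖) / (m / n * ‖z‖) := by gcongr
    _ = ‖z‖ * Real.exp (m / n * ‖z‖) / n := by field_simp
    _ ≤ ‖z‖ * Real.exp ‖z‖ / n := by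
        gcongr; exact mul_le_of_le_one_left hz'.le frac_le_one

theorem norm_exp_mul_sub_one_div_le {t : ℝ} (ht : 0 ≤ t) (z : ℂ) :
    ‖(Complex.exp (t * z) - 1) / z‖ ≤ t * Real.exp (t * ‖z‖) := by
  have numerator_le : ‖Complex.exp (t * z) - 1‖ ≤ t * ‖z‖ * Real.exp (t * ‖z‖) := by
    simpa [abs_of_nonneg ht] using Complex.norm_exp_sub_sum_le_norm_mul_exp (t * z) 1
  rw [norm_div]
  refine div_le_of_le_mul₀ (norm_nonneg z) (by positivity) (numerator_le.trans_eq ?_)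
  ring

theorem norm_exp_slope_sub_exp_slope_le {z : ℂ} (hz : z ≠ 0) {t : ℝ} (ht : 0 < t) (ht1 : t ≤ 1) :
    ‖(Complex.exp (t * z) - 1) / (t * z) - (Complex.exp z - 1) / z‖ ≤
      2 * Real.exp ‖z‖ * (1 - t) := by
  have hs : 0 ≤ 1 - t := sub_nonneg.mpr ht1
  have ht' : (t : ℂ) ≠ 0 := mod_cast ht.ne'
  have exp_split : Complex.exp z = Complex.exp (t * z) * Complex.exp ((1 - t : ℝ) * z) := by
    rw [← Complex.exp_add, ← add_mul, ← Complex.ofReal_add, add_sub_cancel, Complex.ofReal_one,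
      one_mul]
  -- Cut the increment of `exp` over `[0, z]` at `t * z`: both terms then carry a factor `1 - t`.
  have slope_sub_slope : (Complex.exp (t * z) - 1) / (t * z) - (Complex.exp z - 1) / z =
      ((1 - t) / t : ℝ) * ((Complex.exp (t * z) - 1) / z) -
        Complex.exp (t * z) * ((Complex.exp ((1 - t : ℝ) * z) - 1) / z) := by
    rw [exp_split]; push_cast; field_simp; ring
  have scaled_slope_le : ‖((1 - t) / t : ℝ) * ((Complex.exp (t * z) - 1) / z)‖ ≤
      Real.exp ‖z‖ * (1 - t) :=
    calc ‖((1 - t) / t : ℝ) * ((Complex.exp (t * z) - 1) / z)‖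
        = (1 - t) / t * ‖(Complex.exp (t * z) - 1) / z‖ := by
          rw [norm_mul, Complex.norm_of_nonneg (div_nonneg hs ht.le)]
      _ ≤ (1 - t) / t * (t * Real.exp (t * ‖z‖)) := by
          gcongr; exact norm_exp_mul_sub_one_div_le ht.le z
      _ = Real.exp (t * ‖z‖) * (1 - t) := by field_simp
      _ ≤ Real.exp ‖z‖ * (1 - t) := by gcongr; exact mul_le_of_le_one_left (norm_nonneg z) ht1
  have tail_slope_le : ‖Complex.exp (t * z) * ((Complex.exp ((1 - t : ℝ) * z) - 1) / z)‖ ≤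
      Real.exp ‖z‖ * (1 - t) :=
    calc ‖Complex.exp (t * z) * ((Complex.exp ((1 - t : ℝ) * z) - 1) / z)‖
        ≤ Real.exp (t * ‖z‖) * ((1 - t) * Real.exp ((1 - t) * ‖z‖)) := by
          refine norm_mul_le_of_le ?_ (norm_exp_mul_sub_one_div_le hs z)
          simpa [abs_of_pos ht] using Complex.norm_exp_le_exp_norm (t * z)
      _ = Real.exp (t * ‖z‖ + (1 - t) * ‖z‖) * (1 - t) := by rw [Real.exp_add]; ring
      _ = Real.exp ‖z‖ * (1 - t) := by rw [← add_mul, add_sub_cancel, one_mul]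
  rw [slope_sub_slope]
  linarith [norm_sub_le_of_le scaled_slope_le tail_slope_le]

theorem pull_given_one_informed_neighbor_general {a : ℂ} (ha : a ≠ 0) {n k : ℕ} (hk : 1 ≤ k)
    (hkn : k < n) :
    ‖(1 - (1 - a / n) ^ (n - k)) / (a * (1 - (k : ℂ) / n)) - (1 - Complex.exp (-a)) / a‖ ≤
      (‖a‖ + 2) * Real.exp ‖a‖ * ((k : ℝ) / n) := by
  have hn : (0 : ℝ) < n := mod_cast (Nat.zero_le k).trans_lt hkn
  have frac_eq : ((n - k : ℕ) : ℂ) / n = 1 - (k : ℂ) / n := by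
    rw [Nat.cast_sub hkn.le, sub_div, div_self (mod_cast hn.ne')]
  have frac_pos : 0 < 1 - (k : ℝ) / n := sub_pos.mpr ((div_lt_one hn).mpr (mod_cast hkn))
  have power_le := norm_one_add_div_pow_sub_exp_div_le (neg_ne_zero.mpr ha)
    (Nat.sub_ne_zero_of_lt hkn) (Nat.sub_le n k)
  have slope_le := norm_exp_slope_sub_exp_slope_le (neg_ne_zero.mpr ha) frac_pos
    (sub_le_self 1 (by positivity))
  rw [frac_eq, norm_neg] at power_le
  rw [norm_neg, sub_sub_cancel] at slope_le
  push_cast at slope_le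
  calc ‖(1 - (1 - a / n) ^ (n - k)) / (a * (1 - (k : ℂ) / n)) - (1 - Complex.exp (-a)) / a‖
      = ‖((1 + -a / n) ^ (n - k) - Complex.exp ((1 - k / n) * -a)) / ((1 - k / n) * -a) +
          ((Complex.exp ((1 - k / n) * -a) - 1) / ((1 - k / n) * -a) -
            (Complex.exp (-a) - 1) / -a)‖ := by
        congr 1; simp only [mul_neg, div_neg]; ring
    _ ≤ ‖a‖ * Real.exp ‖a‖ / n + 2 * Real.exp ‖a‖ * (k / n) := norm_add_le_of_le power_le slope_le
    _ ≤ ‖a‖ * Real.exp ‖a‖ * (k / n) + 2 * Real.exp ‖a‖ * (k / n) := by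
        rw [div_eq_mul_one_div]; gcongr; exact_mod_cast hk
    _ = (‖a‖ + 2) * Real.exp ‖a‖ * (k / n) := by ring

/-- Quantitative form of equation (8) in the proof of Lemma 6:
P[PL | INF(1)] = (1 - (1-a/n)^{n-k})/(a(1-μ)) = (1 - e^{-a})/a + O(μ) with μ = k/n. -/
theorem pull_given_one_informed_neighbor (a : ℝ) (ha : 0 < a) :
    ∃ C : ℝ, 0 < C ∧ ∃ N : ℕ, ∀ n : ℕ, N ≤ n → ∀ k : ℕ, 1 ≤ k → 2 * k ≤ n →
      |(1 - (1 - a / n) ^ (n - k)) / (a * (1 - (k : ℝ) / n)) - (1 - Real.exp (-a)) / a|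
        ≤ C * ((k : ℝ) / n) := by
  refine ⟨(|a| + 2) * Real.exp |a|, by positivity, 0, fun n _ k hk hkn ↦ ?_⟩
  rw [← Real.norm_eq_abs, ← Complex.norm_real]
  simpa using
    pull_given_one_informed_neighbor_general (a := a) (mod_cast ha.ne') hk (by lia : k < n)
end
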